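/- If L ∈ Gr(V,m) satisfies L^⊥ ∩ int(K*) ≠ ∅, then odist(Σ_m,L) = ν̄(L). -/

import Mathlib

/-!
Since `L^⊥` meets the interior of `K*`, there are `e ∈ L^⊥` and `δ > 0` with `δ‖v‖ ≤ ⟪e, v⟫` on
`K`, so `L ∩ K = {0}`. If `m = 0`, both infima are over empty sets. Assume `m ≥ 1`.

*Lower bound.* An ill-posed `L'` contains a nonzero `v₀ ∈ K`. Rescaling `v ∈ L` to norm one turns
each quotient `|||v₀ - v||| / ‖v‖` into a value `|||v' - x|||` admissible for `ν̄(L)`, hence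
`ν̄(L) ≤ odist(L', L)` (`nubar_le_grOdist`).

*Upper bound.* By compactness the minimum `ν̄(L)` is attained at some `v ∈ K`, `x ∈ L`
(`exists_minimizer`); put `p = v - x`.

If `v ≠ 0`, choose by Hahn-Banach a functional `f` with `f x = 1` and `|f| ≤ ‖·‖`. The rank-one
perturbation `L' = {z + f(z) p : z ∈ L}` contains `v` and satisfies `odist(L', L) ≤ |||p|||`. It
misses `int K`: otherwise `s v + z₀ ∈ int K` for some real `s` and `z₀ ∈ L ∩ ker f`, where `s > 0`
because `L ∩ K = {0}`; after rescaling, `s = 1`, and since `‖x + z₀‖ ≥ f(x + z₀) = 1`,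
moving `v + z₀` slightly towards `x + z₀` would contradict minimality (`perturbed_not_mem_interior`). Separating `L'` from `int K` shows that `L'` is
ill-posed.

If `v = 0`, then `ν̄(L) = |||x|||`, which bounds `odist(L', L)` for every `L'`: compare with the
vectors `t x`, `t → ∞` (`grOdist_le_of_mem`). So any ill-posed subspace will do, and one
exists: minimising a nonzero `x ∈ L` over the compact base `{v ∈ K : ⟪e, v⟫ = 1}` gives
`v₀ ∈ K` and `y = x - c e ∈ K*`, both nonzero, with `⟪y, v₀⟫ = 0`, and any `m`-dimensional
subspace between `ℝ v₀` and `y^⊥` is ill-posed (`sigmaIll_nonempty`).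
-/

open Module RealInnerProductSpace

/-- `N` is a norm on the real vector space `V`. -/
structure IsNorm (V : Type*) [AddCommGroup V] [Module ℝ V] (N : V → ℝ) : Prop where
  nonneg : ∀ x, 0 ≤ N x
  eq_zero_iff : ∀ x, N x = 0 ↔ x = 0
  smul_eq : ∀ (c : ℝ) (x : V), N (c • x) = |c| * N x
  add_le : ∀ x y, N (x + y) ≤ N x + N y

/-- `K` is a regular closed convex cone: closed, convex, a cone, pointed and solid. -/
structure IsRegularCone (V : Type*) [NormedAddCommGroup V] [InnerProductSpace ℝ V]
    (K : Set V) : Prop where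
  closed : IsClosed K
  convex : Convex ℝ K
  smul_mem : ∀ ⦃c : ℝ⦄, 0 < c → ∀ ⦃x⦄, x ∈ K → c • x ∈ K
  pointed : K ∩ (-K) = {0}
  solid : (interior K).Nonempty

variable {V : Type*} [NormedAddCommGroup V] [InnerProductSpace ℝ V]

/-- The dual norm of `N` with respect to the inner product of `V`. -/
noncomputable def dualNorm (N : V → ℝ) (u : V) : ℝ :=
  sSup {r : ℝ | ∃ x : V, N x = 1 ∧ r = ⟪u, x⟫}

/-- The dual cone of `K`. -/
def dualCone (K : Set V) : Set V := {u : V | ∀ x ∈ K, 0 ≤ ⟪u, x⟫}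

/-- `dist(L1,L2) = max_{x ∈ L1, x ≠ 0} min_{v ∈ L2} |||x - v||| / ‖x‖`,
with `‖·‖ = N` and `|||·||| = N'`. -/
noncomputable def grDist (N N' : V → ℝ) (L1 L2 : Submodule ℝ V) : ℝ :=
  sSup {d : ℝ | ∃ x ∈ L1, x ≠ 0 ∧ d = sInf {c : ℝ | ∃ v ∈ L2, c = N' (x - v) / N x}}

/-- `odist(L1,L2) = max_{x ∈ L1, x ≠ 0} inf_{v ∈ L2, v ≠ 0} |||x - v||| / ‖v‖`. -/
noncomputable def grOdist (N N' : V → ℝ) (L1 L2 : Submodule ℝ V) : ℝ :=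
  sSup {d : ℝ | ∃ x ∈ L1, x ≠ 0 ∧
    d = sInf {c : ℝ | ∃ v ∈ L2, v ≠ 0 ∧ c = N' (x - v) / N v}}

/-- The set `Σ_m` of ill-posed `m`-dimensional subspaces. -/
def SigmaIll (K : Set V) (m : ℕ) : Set (Submodule ℝ V) :=
  {L | finrank ℝ L = m ∧ (L : Set V) ∩ K ≠ {0} ∧ (Lᗮ : Set V) ∩ dualCone K ≠ {0}}

/-- `dist(L, Σ_m) = inf_{L' ∈ Σ_m} dist(L, L')`. -/
noncomputable def distToIll (N N' : V → ℝ) (K : Set V) (m : ℕ) (L : Submodule ℝ V) : ℝ :=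
  sInf {d : ℝ | ∃ L' ∈ SigmaIll K m, d = grDist N N' L L'}

/-- `odist(Σ_m, L) = inf_{L' ∈ Σ_m} odist(L', L)`. -/
noncomputable def odistToIll (N N' : V → ℝ) (K : Set V) (m : ℕ) (L : Submodule ℝ V) : ℝ :=
  sInf {d : ℝ | ∃ L' ∈ SigmaIll K m, d = grOdist N N' L' L}

/-- `ν(L) = min {‖y - u‖* : u ∈ K*, y ∈ L^⊥, |||u|||* = 1}`. -/
noncomputable def nu (N N' : V → ℝ) (K : Set V) (L : Submodule ℝ V) : ℝ :=
  sInf {r : ℝ | ∃ u ∈ dualCone K, ∃ y ∈ Lᗮ, dualNorm N' u = 1 ∧ r = dualNorm N (y - u)}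

/-- `ν̄(L) = min {|||v - x||| : v ∈ K, x ∈ L, ‖x‖ = 1}`. -/
noncomputable def nubar (N N' : V → ℝ) (K : Set V) (L : Submodule ℝ V) : ℝ :=
  sInf {r : ℝ | ∃ v ∈ K, ∃ x ∈ L, N x = 1 ∧ r = N' (v - x)}

/-- `λ_v(x) = sup {t : x - t v ∈ K}`. -/
noncomputable def lambdaVec (K : Set V) (v x : V) : ℝ := sSup {t : ℝ | x - t • v ∈ K}

/-- `σ(L) = min_{v ∈ K, |||v||| = 1} max_{x ∈ L, ‖x‖ ≤ 1} λ_v(x)`. -/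
noncomputable def sigmaMeas (N N' : V → ℝ) (K : Set V) (L : Submodule ℝ V) : ℝ :=
  sInf {r : ℝ | ∃ v ∈ K, N' v = 1 ∧
    r = sSup {c : ℝ | ∃ x ∈ L, N x ≤ 1 ∧ c = lambdaVec K v x}}

/-- `Sym(L) = min_{v ∈ K, ‖v‖ = 1} sup {t ≥ 0 : ∃ x ∈ K, ‖x‖ ≤ 1, x + t v ∈ L}`. -/
noncomputable def symMeas (N : V → ℝ) (K : Set V) (L : Submodule ℝ V) : ℝ :=
  sInf {r : ℝ | ∃ v ∈ K, N v = 1 ∧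
    r = sSup {t : ℝ | 0 ≤ t ∧ ∃ x ∈ K, N x ≤ 1 ∧ x + t • v ∈ L}}

/-- The norm `‖·‖_e` induced by the pair `(K, e)`. -/
noncomputable def inducedNorm (K : Set V) (e : V) (x : V) : ℝ :=
  sInf {α : ℝ | 0 ≤ α ∧ x + α • e ∈ K ∧ -x + α • e ∈ K}

/-! ### Norms in finite dimension -/

theorem IsNorm.zero {N : V → ℝ} (hN : IsNorm V N) : N 0 = 0 := (hN.eq_zero_iff 0).2 rfl

theorem IsNorm.pos {N : V → ℝ} (hN : IsNorm V N) {x : V} (hx : x ≠ 0) : 0 < N x :=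
  lt_of_le_of_ne (hN.nonneg x) fun h => hx ((hN.eq_zero_iff x).1 h.symm)

theorem IsNorm.neg {N : V → ℝ} (hN : IsNorm V N) (x : V) : N (-x) = N x := by
  simpa using hN.smul_eq (-1) x

theorem IsNorm.ne_zero {N : V → ℝ} (hN : IsNorm V N) {x : V} (hx : N x = 1) : x ≠ 0 := by
  rintro rfl
  rw [hN.zero] at hx
  exact zero_ne_one hx

theorem IsNorm.continuous [FiniteDimensional ℝ V] {N : V → ℝ} (hN : IsNorm V N) :
    Continuous N := by
  have hc : ConvexOn ℝ Set.univ N := by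
    refine ⟨convex_univ, fun x _ y _ a b ha hb _ => ?_⟩
    have h := hN.add_le (a • x) (b • y)
    rwa [hN.smul_eq, hN.smul_eq, abs_of_nonneg ha, abs_of_nonneg hb] at h
  exact hc.locallyLipschitz.continuous

/-- Half of the equivalence of norms: `N` dominates a multiple of the ambient norm. -/
theorem IsNorm.exists_bound [FiniteDimensional ℝ V] {N : V → ℝ} (hN : IsNorm V N) :
    ∃ c : ℝ, 0 < c ∧ ∀ x, c * ‖x‖ ≤ N x := by
  rcases (Metric.sphere (0 : V) 1).eq_empty_or_nonempty with h | h
  · refine ⟨1, one_pos, fun x => ?_⟩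
    by_cases hx : x = 0
    · simp [hx, hN.zero]
    · have : ‖x‖⁻¹ • x ∈ Metric.sphere (0 : V) 1 := by
        simp [norm_smul, hx]
      rw [h] at this
      exact this.elim
  · obtain ⟨s, hs, hmin⟩ :=
      (isCompact_sphere (0 : V) 1).exists_isMinOn h hN.continuous.continuousOn
    have hs1 : ‖s‖ = 1 := by simpa using hs
    refine ⟨N s, hN.pos (by rintro rfl; simp at hs1), fun x => ?_⟩
    by_cases hx : x = 0
    · simp [hx, hN.zero]
    · have hm : ‖x‖⁻¹ • x ∈ Metric.sphere (0 : V) 1 := by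
        simp [norm_smul, hx]
      have h1 : N s ≤ N (‖x‖⁻¹ • x) := hmin hm
      have hx' : 0 < ‖x‖ := norm_pos_iff.2 hx
      rw [hN.smul_eq, abs_of_pos (inv_pos.2 hx'), inv_mul_eq_div, le_div_iff₀ hx'] at h1
      exact h1

/-- Hahn-Banach: a unit vector of `N` has a norming functional. -/
theorem IsNorm.exists_norming {N : V → ℝ} (hN : IsNorm V N) {x : V} (hx : N x = 1) :
    ∃ f : V →ₗ[ℝ] ℝ, f x = 1 ∧ ∀ z, |f z| ≤ N z := by
  have hx0 := hN.ne_zero hx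
  obtain ⟨g, hg, hgN⟩ := exists_extension_of_le_sublinear
    (LinearPMap.mkSpanSingleton x (1 : ℝ) hx0) N
    (fun c hc y => by rw [hN.smul_eq, abs_of_pos hc]) hN.add_le (by
      rintro ⟨y, hy⟩
      obtain ⟨c, rfl⟩ := Submodule.mem_span_singleton.1 hy
      rw [LinearPMap.mkSpanSingleton'_apply]
      simpa [hN.smul_eq, hx] using le_abs_self c)
  refine ⟨g, ?_, fun z => abs_le.2 ⟨?_, hgN z⟩⟩
  · have h := hg ⟨x, Submodule.mem_span_singleton_self x⟩
    have h2 := LinearPMap.mkSpanSingleton_apply ℝ ℝ (σ := RingHom.id ℝ) hx0 (1 : ℝ)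
    exact h.trans h2
  · have h := hgN (-z)
    rw [hN.neg, map_neg] at h
    linarith

/-! ### The cone -/

theorem IsRegularCone.zero_mem {K : Set V} (hK : IsRegularCone V K) : (0 : V) ∈ K := by
  have h : (0 : V) ∈ K ∩ (-K) := by rw [hK.pointed]; rfl
  exact h.1

theorem IsRegularCone.add_mem {K : Set V} (hK : IsRegularCone V K) {a b : V} (ha : a ∈ K)
    (hb : b ∈ K) : a + b ∈ K := by
  have h := hK.smul_mem (c := 2) (by norm_num)
    (hK.convex ha hb (a := 1 / 2) (b := 1 / 2) (by norm_num) (by norm_num) (by norm_num))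
  rw [smul_add, smul_smul, smul_smul] at h
  norm_num at h
  exact h

theorem IsRegularCone.zero_notMem_interior {K : Set V} (hK : IsRegularCone V K) {w : V}
    (hw : w ≠ 0) : (0 : V) ∉ interior K := by
  intro h0
  obtain ⟨ε, hε, hball⟩ := Metric.mem_nhds_iff.1 (mem_interior_iff_mem_nhds.1 h0)
  have hw' : 0 < ‖w‖ := norm_pos_iff.2 hw
  have hc : 0 < ε / 2 / ‖w‖ := by positivity
  have hn : ‖(ε / 2 / ‖w‖) • w‖ < ε := by
    rw [norm_smul, Real.norm_of_nonneg hc.le, div_mul_cancel₀ _ hw'.ne']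
    linarith
  have h : (ε / 2 / ‖w‖) • w ∈ K ∩ (-K) :=
    ⟨hball (by simpa using hn), hball (by rw [mem_ball_zero_iff, norm_neg]; exact hn)⟩
  rw [hK.pointed] at h
  exact (smul_ne_zero hc.ne' hw) h

theorem exists_coercive {K : Set V} {e : V} (he : e ∈ interior (dualCone K)) :
    ∃ δ : ℝ, 0 < δ ∧ ∀ v ∈ K, δ * ‖v‖ ≤ ⟪e, v⟫ := by
  obtain ⟨ε, hε, hball⟩ := Metric.mem_nhds_iff.1 (mem_interior_iff_mem_nhds.1 he)
  refine ⟨ε / 2, by positivity, fun v hv => ?_⟩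
  by_cases hv0 : v = 0
  · simp [hv0]
  have hv' : 0 < ‖v‖ := norm_pos_iff.2 hv0
  have hc : 0 < ε / 2 / ‖v‖ := by positivity
  have hmem : e - (ε / 2 / ‖v‖) • v ∈ dualCone K := by
    apply hball
    rw [mem_ball_iff_norm, sub_sub_cancel_left, norm_neg, norm_smul, Real.norm_of_nonneg hc.le,
      div_mul_cancel₀ _ hv'.ne']
    linarith
  have h := hmem v hv
  rw [inner_sub_left, real_inner_smul_left, real_inner_self_eq_norm_sq] at h
  have h2 : ε / 2 / ‖v‖ * ‖v‖ ^ 2 = ε / 2 * ‖v‖ := by field_simp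
  linarith

theorem eq_zero_of_mem_cone {K : Set V} {L : Submodule ℝ V}
    (hint : ((Lᗮ : Set V) ∩ interior (dualCone K)).Nonempty) {z : V} (hz : z ∈ L) (hzK : z ∈ K) :
    z = 0 := by
  obtain ⟨e, heL, he⟩ := hint
  obtain ⟨δ, hδ, h⟩ := exists_coercive he
  have h1 := h z hzK
  rw [Submodule.inner_left_of_mem_orthogonal hz heL] at h1
  exact norm_le_zero_iff.1 (by nlinarith [norm_nonneg z])

/-- Separation: a subspace missing `int K` has a nonzero dual vector in its complement. -/
theorem exists_dual_of_disjoint [FiniteDimensional ℝ V] {K : Set V} (hK : IsRegularCone V K)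
    (M : Submodule ℝ V) (hM : ∀ w ∈ M, w ∉ interior K) :
    ∃ y ∈ Mᗮ, y ∈ dualCone K ∧ y ≠ 0 := by
  obtain ⟨f, u, hf1, hf2⟩ := geometric_hahn_banach_open hK.convex.interior isOpen_interior
    M.convex (Set.disjoint_left.2 fun w hw hwM => hM w hwM hw)
  -- a linear functional bounded below on a subspace vanishes there
  have hfM : ∀ w ∈ M, f w = 0 := by
    intro w hw
    by_contra hne
    have h := hf2 (((u - 1) / f w) • w) (M.smul_mem _ hw)
    rw [map_smul, smul_eq_mul, div_mul_cancel₀ _ hne] at h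
    linarith
  have hu : u ≤ 0 := by simpa using hf2 0 M.zero_mem
  have hfK : ∀ v ∈ K, f v ≤ 0 := by
    intro v hv
    have hcl : v ∈ closure (interior K) := by
      rw [hK.convex.closure_interior_eq_closure_of_nonempty_interior hK.solid]
      exact subset_closure hv
    exact closure_minimal (t := {z | f z ≤ 0}) (fun z hz => ((hf1 z hz).le.trans hu))
      (isClosed_le f.continuous continuous_const) hcl
  have hin : ∀ z, ⟪(InnerProductSpace.toDual ℝ V).symm f, z⟫ = f z := fun z =>
    InnerProductSpace.toDual_symm_apply
  refine ⟨-(InnerProductSpace.toDual ℝ V).symm f, ?_, ?_, ?_⟩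
  · rw [Submodule.mem_orthogonal']
    intro w hw
    rw [inner_neg_left, hin, hfM w hw, neg_zero]
  · intro v hv
    rw [inner_neg_left, hin]
    linarith [hfK v hv]
  · intro h0
    obtain ⟨k, hk⟩ := hK.solid
    have h1 := hin k
    rw [neg_eq_zero.1 h0, inner_zero_left] at h1
    linarith [hf1 k hk]

/-! ### Ill-posed subspaces -/

theorem mem_sigmaIll {K : Set V} {m : ℕ} {M : Submodule ℝ V} (hm : finrank ℝ M = m) {v y : V}
    (hv : v ∈ M) (hvK : v ∈ K) (hv0 : v ≠ 0) (hy : y ∈ Mᗮ) (hyK : y ∈ dualCone K)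
    (hy0 : y ≠ 0) : M ∈ SigmaIll K m := by
  refine ⟨hm, fun h => hv0 ?_, fun h => hy0 ?_⟩
  · have h1 : v ∈ (M : Set V) ∩ K := ⟨hv, hvK⟩
    rw [h] at h1
    exact h1
  · have h1 : y ∈ (Mᗮ : Set V) ∩ dualCone K := ⟨hy, hyK⟩
    rw [h] at h1
    exact h1

theorem exists_mem_of_sigmaIll {K : Set V} (hK : IsRegularCone V K) {m : ℕ} {M : Submodule ℝ V}
    (hM : M ∈ SigmaIll K m) : ∃ v ∈ M, v ∈ K ∧ v ≠ 0 := by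
  by_contra! h
  exact hM.2.1 (Set.Subset.antisymm (fun z hz => h z hz.1 hz.2)
    (Set.singleton_subset_iff.2 ⟨M.zero_mem, hK.zero_mem⟩))

theorem exists_intermediate [FiniteDimensional ℝ V] (P Q : Submodule ℝ V) (hPQ : P ≤ Q) (m : ℕ)
    (hP : finrank ℝ P ≤ m) (hQ : m ≤ finrank ℝ Q) :
    ∃ M : Submodule ℝ V, P ≤ M ∧ M ≤ Q ∧ finrank ℝ M = m := by
  induction m, hP using Nat.le_induction with
  | base => exact ⟨P, le_rfl, hPQ, rfl⟩
  | succ k hk ih =>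
    obtain ⟨M, hPM, hMQ, hMk⟩ := ih (by omega)
    have hlt : M < Q := lt_of_le_of_ne hMQ (by rintro rfl; omega)
    obtain ⟨q, hq, hqM⟩ := SetLike.exists_of_lt hlt
    refine ⟨M ⊔ Submodule.span ℝ {q}, hPM.trans le_sup_left,
      sup_le hMQ ((Submodule.span_singleton_le_iff_mem _ _).2 hq), ?_⟩
    have h1 := Submodule.finrank_sup_add_finrank_inf_eq M (Submodule.span ℝ {q})
    have hq0 : q ≠ 0 := by rintro rfl; exact hqM M.zero_mem
    have h2 : M ⊓ Submodule.span ℝ {q} = ⊥ :=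
      disjoint_iff.1 ((Submodule.disjoint_span_singleton' hq0).2 hqM)
    rw [h2, finrank_bot, finrank_span_singleton hq0, hMk] at h1
    omega

theorem sigmaIll_nonempty [FiniteDimensional ℝ V] {K : Set V} (hK : IsRegularCone V K)
    {m : ℕ} (hm1 : 1 ≤ m) (hm : m < finrank ℝ V) {L : Submodule ℝ V}
    (hint : ((Lᗮ : Set V) ∩ interior (dualCone K)).Nonempty) {x : V} (hx : x ∈ L) (hx0 : x ≠ 0) :
    (SigmaIll K m).Nonempty := by
  obtain ⟨e, heL, he⟩ := hint
  obtain ⟨δ, hδ, hcoer⟩ := exists_coercive he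
  have hpos : ∀ v ∈ K, v ≠ 0 → 0 < ⟪e, v⟫ := fun v hv hv0 =>
    lt_of_lt_of_le (mul_pos hδ (norm_pos_iff.2 hv0)) (hcoer v hv)
  -- the base of `K` cut out by `e`
  set B : Set V := K ∩ {v | ⟪e, v⟫ = 1} with hB
  have hBc : IsCompact B := by
    refine Metric.isCompact_of_isClosed_isBounded
      (hK.closed.inter (isClosed_eq (by fun_prop) continuous_const)) ?_
    refine (Metric.isBounded_closedBall (x := (0 : V)) (r := 1 / δ)).subset fun v hv => ?_
    have h1 := hcoer v hv.1
    have h2 : ⟪e, v⟫ = 1 := hv.2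
    rw [mem_closedBall_zero_iff, le_div_iff₀ hδ]
    linarith
  have hBne : B.Nonempty := by
    obtain ⟨k, hk⟩ := hK.solid
    have hk0 : k ≠ 0 := by rintro rfl; exact hK.zero_notMem_interior hx0 hk
    have hek := hpos k (interior_subset hk) hk0
    refine ⟨⟪e, k⟫⁻¹ • k, hK.smul_mem (inv_pos.2 hek) (interior_subset hk), ?_⟩
    change ⟪e, ⟪e, k⟫⁻¹ • k⟫ = 1
    rw [real_inner_smul_right, inv_mul_cancel₀ hek.ne']
  obtain ⟨v₀, hv₀, hmin⟩ := hBc.exists_isMinOn hBne (f := fun v => ⟪x, v⟫) (by fun_prop)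
  have hev₀ : ⟪e, v₀⟫ = 1 := hv₀.2
  set c : ℝ := ⟪x, v₀⟫ with hc
  have hv₀0 : v₀ ≠ 0 := by rintro rfl; simp at hev₀
  have hy0 : x - c • e ≠ 0 := by
    intro h
    have h1 : ⟪x, x⟫ = c * ⟪e, x⟫ := by
      rw [← real_inner_smul_left, ← sub_eq_zero, ← inner_sub_left, h, inner_zero_left]
    rw [Submodule.inner_left_of_mem_orthogonal hx heL, mul_zero] at h1
    exact hx0 (inner_self_eq_zero.1 h1)
  have hyv₀ : ⟪x - c • e, v₀⟫ = 0 := by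
    rw [inner_sub_left, real_inner_smul_left, hev₀, mul_one, ← hc, sub_self]
  have hyK : x - c • e ∈ dualCone K := by
    intro v hv
    by_cases hv0 : v = 0
    · simp [hv0]
    have hev := hpos v hv hv0
    have hmem : ⟪e, v⟫⁻¹ • v ∈ B := by
      refine ⟨hK.smul_mem (inv_pos.2 hev) hv, ?_⟩
      change ⟪e, ⟪e, v⟫⁻¹ • v⟫ = 1
      rw [real_inner_smul_right, inv_mul_cancel₀ hev.ne']
    have h1 : c ≤ ⟪x, ⟪e, v⟫⁻¹ • v⟫ := hmin hmem
    rw [real_inner_smul_right, inv_mul_eq_div, le_div_iff₀ hev] at h1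
    rw [inner_sub_left, real_inner_smul_left]
    linarith
  have hfr : finrank ℝ (Submodule.span ℝ {x - c • e})ᗮ + 1 = finrank ℝ V := by
    have h1 := Submodule.finrank_add_finrank_orthogonal (Submodule.span ℝ {x - c • e})
    rw [finrank_span_singleton hy0] at h1
    omega
  obtain ⟨M, hM1, hM2, hM3⟩ := exists_intermediate (Submodule.span ℝ {v₀})
    (Submodule.span ℝ {x - c • e})ᗮ
    ((Submodule.span_singleton_le_iff_mem _ _).2
      (Submodule.mem_orthogonal_singleton_iff_inner_right.2 hyv₀)) m
    (by rw [finrank_span_singleton hv₀0]; exact hm1) (by omega)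
  refine ⟨M, mem_sigmaIll hM3 ((Submodule.span_singleton_le_iff_mem _ _).1 hM1) hv₀.1 hv₀0
    ?_ hyK hy0⟩
  rw [Submodule.mem_orthogonal]
  intro u hu
  exact Submodule.mem_orthogonal_singleton_iff_inner_left.1 (hM2 hu)

/-! ### Bounds on the one-sided distance -/

theorem quotient_bddBelow {N N' : V → ℝ} (hN : IsNorm V N) (hN' : IsNorm V N')
    (L : Submodule ℝ V) (w : V) :
    BddBelow {c : ℝ | ∃ v ∈ L, v ≠ 0 ∧ c = N' (w - v) / N v} :=
  ⟨0, by rintro _ ⟨v, -, -, rfl⟩; exact div_nonneg (hN'.nonneg _) (hN.nonneg _)⟩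

/-- Comparing `w` with `t x` and letting `t → ∞`. -/
theorem sInf_quotient_le {N N' : V → ℝ} (hN : IsNorm V N) (hN' : IsNorm V N')
    {L : Submodule ℝ V} {x : V} (hx : x ∈ L) (hx1 : N x = 1) (w : V) :
    sInf {c : ℝ | ∃ v ∈ L, v ≠ 0 ∧ c = N' (w - v) / N v} ≤ N' x := by
  refine le_of_forall_pos_le_add fun ε hε => ?_
  have ht : 0 < (N' w + 1) / ε := div_pos (by linarith [hN'.nonneg w]) hε
  set t : ℝ := (N' w + 1) / ε with htdef
  have htε : t * ε = N' w + 1 := div_mul_cancel₀ _ hε.ne'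
  refine (csInf_le (quotient_bddBelow hN hN' L w)
    ⟨t • x, L.smul_mem _ hx, smul_ne_zero ht.ne' (hN.ne_zero hx1), rfl⟩).trans ?_
  rw [hN.smul_eq, hx1, abs_of_pos ht, mul_one, div_le_iff₀ ht, sub_eq_add_neg]
  refine (hN'.add_le _ _).trans ?_
  rw [hN'.neg, hN'.smul_eq, abs_of_pos ht]
  nlinarith

theorem grOdist_le_of_mem {N N' : V → ℝ} (hN : IsNorm V N) (hN' : IsNorm V N')
    {L : Submodule ℝ V} {x : V} (hx : x ∈ L) (hx1 : N x = 1) (M : Submodule ℝ V) :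
    grOdist N N' M L ≤ N' x := by
  refine Real.sSup_le ?_ (hN'.nonneg x)
  rintro _ ⟨w, -, -, rfl⟩
  exact sInf_quotient_le hN hN' hx hx1 w

theorem grOdist_nonneg {N N' : V → ℝ} (hN : IsNorm V N) (hN' : IsNorm V N')
    (M L : Submodule ℝ V) : 0 ≤ grOdist N N' M L := by
  refine Real.sSup_nonneg ?_
  rintro _ ⟨w, -, -, rfl⟩
  refine Real.sInf_nonneg ?_
  rintro _ ⟨v, -, -, rfl⟩
  exact div_nonneg (hN'.nonneg _) (hN.nonneg _)

theorem odistToIll_le {N N' : V → ℝ} (hN : IsNorm V N) (hN' : IsNorm V N') {K : Set V} {m : ℕ}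
    {M : Submodule ℝ V} (hM : M ∈ SigmaIll K m) (L : Submodule ℝ V) :
    odistToIll N N' K m L ≤ grOdist N N' M L :=
  csInf_le ⟨0, by rintro _ ⟨M', -, rfl⟩; exact grOdist_nonneg hN hN' M' L⟩ ⟨M, hM, rfl⟩

theorem nubar_le_grOdist {N N' : V → ℝ} (hN : IsNorm V N) (hN' : IsNorm V N') {K : Set V}
    (hK : IsRegularCone V K) {m : ℕ} {M L : Submodule ℝ V} (hM : M ∈ SigmaIll K m) {x : V}
    (hx : x ∈ L) (hx1 : N x = 1) : nubar N N' K L ≤ grOdist N N' M L := by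
  obtain ⟨v₀, hv₀M, hv₀K, hv₀0⟩ := exists_mem_of_sigmaIll hK hM
  have hbdd : BddAbove {d : ℝ | ∃ w ∈ M, w ≠ 0 ∧
      d = sInf {c : ℝ | ∃ v ∈ L, v ≠ 0 ∧ c = N' (w - v) / N v}} :=
    ⟨N' x, by rintro _ ⟨w, -, -, rfl⟩; exact sInf_quotient_le hN hN' hx hx1 w⟩
  refine le_trans ?_ (le_csSup hbdd ⟨v₀, hv₀M, hv₀0, rfl⟩)
  refine le_csInf ⟨_, x, hx, hN.ne_zero hx1, rfl⟩ ?_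
  rintro _ ⟨v, hv, hv0, rfl⟩
  have hNv := hN.pos hv0
  refine csInf_le ⟨0, by rintro _ ⟨a, -, b, -, -, rfl⟩; exact hN'.nonneg _⟩
    ⟨(N v)⁻¹ • v₀, hK.smul_mem (inv_pos.2 hNv) hv₀K, (N v)⁻¹ • v, L.smul_mem _ hv, ?_, ?_⟩
  · rw [hN.smul_eq, abs_of_pos (inv_pos.2 hNv), inv_mul_cancel₀ hNv.ne']
  · rw [← smul_sub, hN'.smul_eq, abs_of_pos (inv_pos.2 hNv), inv_mul_eq_div]

/-! ### The minimizer and the rank-one perturbation -/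

/-- The minimum defining `nubar` is attained. -/
theorem exists_minimizer [FiniteDimensional ℝ V] {N N' : V → ℝ} (hN : IsNorm V N)
    (hN' : IsNorm V N') {K : Set V} (hK : IsRegularCone V K) {L : Submodule ℝ V} {x₀ : V}
    (hx₀ : x₀ ∈ L) (hx₀1 : N x₀ = 1) :
    ∃ v ∈ K, ∃ x ∈ L, N x = 1 ∧
      ∀ v' ∈ K, ∀ x' ∈ L, N x' = 1 → N' (v - x) ≤ N' (v' - x') := by
  obtain ⟨c, hc, hcN⟩ := hN.exists_bound
  obtain ⟨c', hc', hcN'⟩ := hN'.exists_bound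
  have hcont := hN.continuous
  have hcont' := hN'.continuous
  -- the sublevel set of the value at `(0, x₀)`
  set S : Set (V × V) :=
    {q | q.1 ∈ K ∧ q.2 ∈ L ∧ N q.2 = 1 ∧ N' (q.1 - q.2) ≤ N' x₀} with hS
  have hSclosed : IsClosed S := by
    refine (hK.closed.preimage continuous_fst).inter
      ((L.closed_of_finiteDimensional.preimage continuous_snd).inter (IsClosed.inter ?_ ?_))
    · exact isClosed_eq (hcont.comp continuous_snd) continuous_const
    · exact isClosed_le (hcont'.comp (continuous_fst.sub continuous_snd)) continuous_const
  have hSbdd : Bornology.IsBounded S := by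
    refine (Metric.isBounded_closedBall (x := (0 : V × V)) (r := N' x₀ / c' + 1 / c)).subset ?_
    rintro ⟨v, x⟩ ⟨-, -, hx1, hvx⟩
    simp only at hx1 hvx
    have h1 : ‖x‖ ≤ 1 / c := by
      rw [le_div_iff₀ hc]
      linarith [hcN x]
    have h2 : ‖v - x‖ ≤ N' x₀ / c' := by
      rw [le_div_iff₀ hc']
      linarith [hcN' (v - x)]
    have h3 : ‖v‖ ≤ ‖v - x‖ + ‖x‖ := by simpa using norm_add_le (v - x) x
    have h4 := norm_nonneg (v - x)
    rw [mem_closedBall_zero_iff]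
    exact max_le (by simp only; linarith) (by simp only; linarith)
  have hSne : ((0 : V), x₀) ∈ S :=
    ⟨hK.zero_mem, hx₀, hx₀1, by simp only [zero_sub, hN'.neg]; exact le_rfl⟩
  obtain ⟨⟨v, x⟩, ⟨hv, hx, hx1, hle⟩, hmin⟩ :=
    (Metric.isCompact_of_isClosed_isBounded hSclosed hSbdd).exists_isMinOn ⟨_, hSne⟩
      (f := fun q : V × V => N' (q.1 - q.2))
      (hcont'.comp (continuous_fst.sub continuous_snd)).continuousOn
  refine ⟨v, hv, x, hx, hx1, fun v' hv' x' hx' hx'1 => ?_⟩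
  by_cases h : N' (v' - x') ≤ N' x₀
  · exact hmin (show (v', x') ∈ S from ⟨hv', hx', hx'1, h⟩)
  · exact hle.trans (not_le.1 h).le

/-- The perturbed subspace `{z + f z • (v - x) : z ∈ L}` built from a minimizer misses `int K`. -/
theorem perturbed_not_mem_interior {N N' : V → ℝ} (hN : IsNorm V N)
    (hN' : IsNorm V N') {K : Set V} (hK : IsRegularCone V K) {L : Submodule ℝ V}
    (hint : ((Lᗮ : Set V) ∩ interior (dualCone K)).Nonempty) {v x : V} (hv : v ∈ K) (hv0 : v ≠ 0)
    (hx : x ∈ L)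
    (hmin : ∀ v' ∈ K, ∀ x' ∈ L, N x' = 1 → N' (v - x) ≤ N' (v' - x'))
    {f : V →ₗ[ℝ] ℝ} (hfN : ∀ z, |f z| ≤ N z) {z : V} (hz : z ∈ L) :
    z + f z • (v - x) ∉ interior K := by
  intro hw
  have hp : v - x ≠ 0 := fun h =>
    hv0 (eq_zero_of_mem_cone hint (sub_eq_zero.1 h ▸ hx) hv)
  set s : ℝ := f z with hs
  rcases le_or_gt s 0 with hs0 | hs0
  · -- here `z - s x` lies in `L ∩ K`, so it vanishes, and then `s v ∈ int K` with `s ≤ 0`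
    have hmem : z - s • x ∈ K := by
      have hsv : (-s) • v ∈ K := by
        rcases hs0.eq_or_lt with h | h
        · rw [h, neg_zero, zero_smul]; exact hK.zero_mem
        · exact hK.smul_mem (neg_pos.2 h) hv
      have h := hK.add_mem (interior_subset hw) hsv
      convert h using 1
      module
    have hz0 := eq_zero_of_mem_cone hint (L.sub_mem hz (L.smul_mem s hx)) hmem
    have hweq : z + s • (v - x) = s • v := by
      rw [sub_eq_zero.1 hz0]
      module
    rw [hweq] at hw
    rcases hs0.eq_or_lt with h | h
    · rw [h, zero_smul] at hw
      exact hK.zero_notMem_interior hv0 hw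
    · have h1 : (-s) • v ∈ K ∩ (-K) :=
        ⟨hK.smul_mem (neg_pos.2 h) hv, by
          rw [Set.mem_neg, neg_smul, neg_neg]; exact interior_subset hw⟩
      rw [hK.pointed] at h1
      exact smul_ne_zero (neg_pos.2 h).ne' hv0 h1
  · -- moving from `z + s p` by `-ε p` stays in `K` and shortens the distance to `z`
    have hcont : Continuous fun ε : ℝ => z + s • (v - x) - ε • (v - x) := by fun_prop
    have hev : ∀ᶠ ε in nhds (0 : ℝ), z + s • (v - x) - ε • (v - x) ∈ K := by
      refine hcont.continuousAt.eventually_mem ?_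
      simpa using mem_interior_iff_mem_nhds.1 hw
    obtain ⟨ε, hεs, hεK⟩ : ∃ ε ∈ Set.Ioo 0 s, z + s • (v - x) - ε • (v - x) ∈ K := by
      obtain ⟨η, hη, hball⟩ := Metric.eventually_nhds_iff.1 hev
      refine ⟨min (η / 2) (s / 2), ⟨by positivity, ?_⟩, hball ?_⟩
      · linarith [min_le_right (η / 2) (s / 2)]
      · rw [Real.dist_0_eq_abs, abs_of_pos (by positivity)]
        linarith [min_le_left (η / 2) (s / 2)]
    have hsN : s ≤ N z := (le_abs_self _).trans (hfN z)
    have hNz : 0 < N z := hs0.trans_le hsN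
    have h := hmin _ (hK.smul_mem (inv_pos.2 hNz) hεK) ((N z)⁻¹ • z) (L.smul_mem _ hz) (by
      rw [hN.smul_eq, abs_of_pos (inv_pos.2 hNz), inv_mul_cancel₀ hNz.ne'])
    have heq : (N z)⁻¹ • (z + s • (v - x) - ε • (v - x)) - (N z)⁻¹ • z
        = ((N z)⁻¹ * (s - ε)) • (v - x) := by module
    have hpos : 0 < s - ε := sub_pos.2 hεs.2
    rw [heq, hN'.smul_eq, abs_of_pos (mul_pos (inv_pos.2 hNz) hpos)] at h
    have hlt : (N z)⁻¹ * (s - ε) < 1 := by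
      rw [inv_mul_eq_div, div_lt_one hNz]
      linarith [hεs.1]
    nlinarith [hN'.pos hp]

/-- The perturbation of `L` built from a minimizer with `v ≠ 0` is ill-posed and close to `L`. -/
theorem exists_sigmaIll_grOdist_le [FiniteDimensional ℝ V] {N N' : V → ℝ} (hN : IsNorm V N)
    (hN' : IsNorm V N') {K : Set V} (hK : IsRegularCone V K) {L : Submodule ℝ V}
    (hint : ((Lᗮ : Set V) ∩ interior (dualCone K)).Nonempty) {v x : V} (hv : v ∈ K) (hv0 : v ≠ 0)
    (hx : x ∈ L) (hx1 : N x = 1)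
    (hmin : ∀ v' ∈ K, ∀ x' ∈ L, N x' = 1 → N' (v - x) ≤ N' (v' - x')) :
    ∃ M ∈ SigmaIll K (finrank ℝ L), grOdist N N' M L ≤ N' (v - x) := by
  obtain ⟨f, hfx, hfN⟩ := hN.exists_norming hx1
  set T : V →ₗ[ℝ] V := LinearMap.id + f.smulRight (v - x) with hT
  have hTz : ∀ z, T z = z + f z • (v - x) := fun z => by simp [hT]
  have hinj : ∀ z ∈ L, T z = 0 → z = 0 := by
    intro z hz h
    rw [hTz] at h
    by_contra hz0
    have hfz : f z ≠ 0 := by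
      intro h0
      rw [h0, zero_smul, add_zero] at h
      exact hz0 h
    -- `T z = 0` expresses `v` as an element of `L`
    have hvL : v = x - (f z)⁻¹ • z := by
      have h1 : (f z)⁻¹ • (z + f z • (v - x)) = 0 := by rw [h, smul_zero]
      rw [smul_add, smul_smul, inv_mul_cancel₀ hfz, one_smul] at h1
      rw [← sub_eq_zero, ← h1]
      module
    exact hv0 (eq_zero_of_mem_cone hint (hvL ▸ L.sub_mem hx (L.smul_mem _ hz)) hv)
  have hfr : finrank ℝ (L.map T) = finrank ℝ L := by
    rw [← LinearMap.range_domRestrict]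
    refine LinearMap.finrank_range_of_inj ((injective_iff_map_eq_zero _).2 ?_)
    rintro ⟨z, hz⟩ h
    exact Subtype.ext (hinj z hz h)
  obtain ⟨y, hyM, hyK, hy0⟩ := exists_dual_of_disjoint hK (L.map T) (by
    rintro _ ⟨z, hz, rfl⟩
    rw [hTz]
    exact perturbed_not_mem_interior hN hN' hK hint hv hv0 hx hmin hfN hz)
  have hvM : v ∈ L.map T := ⟨x, hx, by rw [hTz, hfx, one_smul]; abel⟩
  refine ⟨L.map T, mem_sigmaIll hfr hvM hv hv0 hyM hyK hy0,
    Real.sSup_le ?_ (hN'.nonneg _)⟩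
  rintro _ ⟨_, ⟨z, hz, rfl⟩, hne, rfl⟩
  have hz0 : z ≠ 0 := by rintro rfl; exact hne (map_zero T)
  refine (csInf_le (quotient_bddBelow hN hN' L _) ⟨z, hz, hz0, rfl⟩).trans ?_
  rw [hTz, add_sub_cancel_left, hN'.smul_eq, div_le_iff₀ (hN.pos hz0), mul_comm]
  exact mul_le_mul_of_nonneg_left (hfN z) (hN'.nonneg _)

/-- If `L^⊥ ∩ int K* ≠ ∅` then `odist(Σ_m, L) = ν̄(L)`. -/
theorem stmt_1 {V : Type*} [NormedAddCommGroup V] [InnerProductSpace ℝ V]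
    [FiniteDimensional ℝ V]
    (N N' : V → ℝ) (hN : IsNorm V N) (hN' : IsNorm V N')
    (K : Set V) (hK : IsRegularCone V K)
    (m : ℕ) (hm : m < finrank ℝ V)
    (L : Submodule ℝ V) (hL : finrank ℝ L = m)
    (hint : ((Lᗮ : Set V) ∩ interior (dualCone K)).Nonempty) :
    odistToIll N N' K m L = nubar N N' K L := by
  rcases Nat.eq_zero_or_pos m with rfl | hm1
  · -- both infima are over the empty set, hence `0`
    have h1 : {d : ℝ | ∃ L' ∈ SigmaIll K 0, d = grOdist N N' L' L} = ∅ := by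
      rw [Set.eq_empty_iff_forall_notMem]
      rintro _ ⟨M, hM, -⟩
      obtain ⟨v, hvM, -, hv0⟩ := exists_mem_of_sigmaIll hK hM
      rw [Submodule.finrank_eq_zero.1 hM.1] at hvM
      exact hv0 hvM
    have h2 : {r : ℝ | ∃ v ∈ K, ∃ x ∈ L, N x = 1 ∧ r = N' (v - x)} = ∅ := by
      rw [Set.eq_empty_iff_forall_notMem]
      rintro _ ⟨v, -, x, hx, hx1, -⟩
      rw [Submodule.finrank_eq_zero.1 hL] at hx
      exact hN.ne_zero hx1 hx
    rw [odistToIll, nubar, h1, h2]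
  · have hLbot : L ≠ ⊥ := by
      rintro rfl
      rw [finrank_bot] at hL
      omega
    obtain ⟨x', hx', hx'0⟩ := Submodule.exists_mem_ne_zero_of_ne_bot hLbot
    have hNx' := hN.pos hx'0
    obtain ⟨v, hv, x, hx, hx1, hmin⟩ := exists_minimizer hN hN' hK
      (L.smul_mem (N x')⁻¹ hx') (by
        rw [hN.smul_eq, abs_of_pos (inv_pos.2 hNx'), inv_mul_cancel₀ hNx'.ne'])
    obtain ⟨M, hM, hMle⟩ : ∃ M ∈ SigmaIll K m, grOdist N N' M L ≤ N' (v - x) := by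
      by_cases hv0 : v = 0
      · obtain ⟨M, hM⟩ := sigmaIll_nonempty hK hm1 hm hint hx (hN.ne_zero hx1)
        refine ⟨M, hM, ?_⟩
        rw [hv0, zero_sub, hN'.neg]
        exact grOdist_le_of_mem hN hN' hx hx1 M
      · exact hL ▸ exists_sigmaIll_grOdist_le hN hN' hK hint hv hv0 hx hx1 hmin
    apply le_antisymm
    · refine ((odistToIll_le hN hN' hM L).trans hMle).trans
        (le_csInf ⟨_, v, hv, x, hx, hx1, rfl⟩ ?_)
      rintro _ ⟨a, ha, b, hb, hb1, rfl⟩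
      exact hmin a ha b hb hb1
    · refine le_csInf ⟨_, M, hM, rfl⟩ ?_
      rintro _ ⟨M', hM', rfl⟩
      exact nubar_le_grOdist hN hN' hK hM' hx hx1
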